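/- arXiv:1101.0201 — 6 statements merged into one kernel-verified Lean document; each statement's English description precedes it below -/
import Mathlib

section
/- Let L be a bialgebra over a field k, let C be a k-coalgebra equipped with a left L-module structure, and let π : L → C be a surjective k-linear map which is a coalgebra homomorphism and is left L-linear in the sense that π(x*y) = x • π(y) for all x, y ∈ L (L acting on itself by left multiplication). Define D := {d ∈ L | (π ⊗ id)(Δ_L(d)) = π(1) ⊗ d}. Then D is a unital subalgebra of L (it contains 1 and is closed under multiplication and scalar multiples), and for every d ∈ D the element Δ_L(d) ∈ L ⊗ L lies in the image of D ⊗ L in L ⊗ L; that is, D is a right L-comodule subalgebra of L. -/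
open TensorProduct

/-- The set `D = {d ∈ L | (π ⊗ id)(Δ d) = π 1 ⊗ d}` of left coaction invariants of `L`
for the left `C`-coaction `(π ⊗ id) ∘ Δ` induced by a coalgebra map `π : L → C`. -/
def coactionInvariants {k L C : Type*} [Field k] [Ring L] [Bialgebra k L]
    [AddCommGroup C] [Module k C] [Coalgebra k C] (π : L →ₗc[k] C) : Set L :=
  {d : L | TensorProduct.map π.toLinearMap LinearMap.id
      (Coalgebra.comul (R := k) d) = π 1 ⊗ₜ[k] d}

/-!
The set `D` is the equalizer of the linear maps `d ↦ (π ⊗ id)(Δ d)` and `d ↦ π 1 ⊗ d`, and by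
flatness tensoring with `L` preserves equalizers. Coassociativity says that `Δ d` equalizes the
tensored maps whenever `d ∈ D`, so `Δ d` lies in the image of `D ⊗ L`.

For products, `ker π` is a left ideal, so flatness makes `ker (π ⊗ id)`, the image of `ker π ⊗ L`,
a left ideal of `L ⊗ L`. Hence `Δ b` may be replaced by `1 ⊗ b` in `(π ⊗ id)(Δ a * Δ b)`.
-/

section Flat

variable {R M N P : Type*} [CommRing R] [AddCommGroup M] [Module R M] [Module.Flat R M]
  [AddCommGroup N] [Module R N] [AddCommGroup P] [Module R P]

theorem ker_rTensor_eq_span_tmul (f : N →ₗ[R] P) :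
    LinearMap.ker (f.rTensor M) =
      Submodule.span R {t : N ⊗[R] M | ∃ n ∈ LinearMap.ker f, ∃ m : M, t = n ⊗ₜ[R] m} := by
  have ker_eq_range : LinearMap.ker (f.rTensor M) =
      LinearMap.range ((LinearMap.ker f).subtype.rTensor M) :=
    (Module.Flat.rTensor_exact M f.exact_subtype_ker_map).linearMap_ker_eq
  rw [ker_eq_range, LinearMap.rTensor, TensorProduct.range_map_eq_span_tmul]
  simp [eq_comm]

theorem eqLocus_rTensor_eq_span_tmul (f g : N →ₗ[R] P) :
    LinearMap.eqLocus (f.rTensor M) (g.rTensor M) =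
      Submodule.span R {t : N ⊗[R] M | ∃ n ∈ LinearMap.eqLocus f g, ∃ m : M, t = n ⊗ₜ[R] m} := by
  rw [LinearMap.eqLocus_eq_ker_sub, LinearMap.eqLocus_eq_ker_sub, ← LinearMap.rTensor_sub,
    ker_rTensor_eq_span_tmul]

end Flat

theorem rTensor_mul_eq_zero {R A B C : Type*} [CommRing R] [Ring A] [Algebra R A] [Ring B]
    [Algebra R B] [Module.Flat R B] [AddCommGroup C] [Module R C] {φ : A →ₗ[R] C}
    (hφ : ∀ x y : A, φ y = 0 → φ (x * y) = 0) (s : A ⊗[R] B) {t : A ⊗[R] B}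
    (ht : φ.rTensor B t = 0) : φ.rTensor B (s * t) = 0 := by
  suffices LinearMap.ker (φ.rTensor B) ≤
      LinearMap.ker (φ.rTensor B ∘ₗ LinearMap.mulLeft R s) from this ht
  rw [ker_rTensor_eq_span_tmul, Submodule.span_le]
  rintro _ ⟨a, ha, b, rfl⟩
  induction s with
  | zero => simp
  | add s₁ s₂ h₁ h₂ => simp_all [add_mul]
  | tmul x y => simp [hφ x a ha]

theorem rTensor_mul_one_tmul {R A B C : Type*} [CommSemiring R] [Semiring A] [Algebra R A]
    [Semiring B] [Algebra R B] [AddCommMonoid C] [Module R C] (φ : A →ₗ[R] C)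
    (t : A ⊗[R] B) (b : B) :
    φ.rTensor B (t * (1 ⊗ₜ[R] b)) = (LinearMap.mulRight R b).lTensor C (φ.rTensor B t) := by
  induction t <;> simp_all [add_mul]

open Coalgebra (comul)

section Semiring

variable {R A C : Type*} [CommSemiring R] [AddCommMonoid A] [Module R A] [Coalgebra R A]
  [AddCommMonoid C] [Module R C]

/-- The elements `a` of a coalgebra `A` with `(φ ⊗ id)(Δ a) = c ⊗ a`. When `φ : A → C` is a
coalgebra map and `c` is grouplike, these are the `c`-coinvariants of `A` as a left `C`-comodule;
here `φ` is only assumed linear and `c` is arbitrary. -/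
def leftCoinvariants (φ : A →ₗ[R] C) (c : C) : Submodule R A :=
  LinearMap.eqLocus (φ.rTensor A ∘ₗ comul) (TensorProduct.mk R C A c)

theorem mem_leftCoinvariants {φ : A →ₗ[R] C} {c : C} {a : A} :
    a ∈ leftCoinvariants φ c ↔ φ.rTensor A (comul a) = c ⊗ₜ[R] a :=
  Iff.rfl

theorem assoc_rTensor_rTensor_comp_comul (φ : A →ₗ[R] C) (a : A) :
    TensorProduct.assoc R C A A ((φ.rTensor A ∘ₗ comul).rTensor A (comul a)) =
      comul.lTensor C (φ.rTensor A (comul a)) := by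
  calc TensorProduct.assoc R C A A ((φ.rTensor A ∘ₗ comul).rTensor A (comul a))
      = φ.rTensor (A ⊗[R] A) (TensorProduct.assoc R A A A (comul.rTensor A (comul a))) := by
        rw [LinearMap.rTensor_comp_apply, LinearMap.rTensor_tensor]
        simp
    _ = φ.rTensor (A ⊗[R] A) (comul.lTensor A (comul a)) := by rw [Coalgebra.coassoc_apply]
    _ = comul.lTensor C (φ.rTensor A (comul a)) := by
        rw [← LinearMap.comp_apply (φ.rTensor _), LinearMap.rTensor_comp_lTensor,
          ← LinearMap.lTensor_comp_rTensor, LinearMap.comp_apply]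

theorem comul_mem_eqLocus_rTensor {φ : A →ₗ[R] C} {c : C} {a : A}
    (ha : a ∈ leftCoinvariants φ c) :
    comul a ∈ LinearMap.eqLocus ((φ.rTensor A ∘ₗ comul).rTensor A)
      ((TensorProduct.mk R C A c).rTensor A) := by
  have assoc_rTensor_mk (t : A ⊗[R] A) :
      TensorProduct.assoc R C A A ((TensorProduct.mk R C A c).rTensor A t) = c ⊗ₜ[R] t := by
    induction t <;> simp_all [TensorProduct.tmul_add]
  apply (TensorProduct.assoc R C A A).injective
  rw [assoc_rTensor_rTensor_comp_comul, mem_leftCoinvariants.mp ha, LinearMap.lTensor_tmul,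
    assoc_rTensor_mk]

end Semiring

theorem comul_mem_span_tmul_leftCoinvariants {R A C : Type*} [CommRing R] [AddCommGroup A]
    [Module R A] [Coalgebra R A] [Module.Flat R A] [AddCommGroup C] [Module R C]
    {φ : A →ₗ[R] C} {c : C} {a : A} (ha : a ∈ leftCoinvariants φ c) :
    comul a ∈ Submodule.span R
      {t : A ⊗[R] A | ∃ b ∈ leftCoinvariants φ c, ∃ y : A, t = b ⊗ₜ[R] y} := by
  rw [leftCoinvariants, ← eqLocus_rTensor_eq_span_tmul]
  exact comul_mem_eqLocus_rTensor ha

theorem one_mem_leftCoinvariants {R A C : Type*} [CommSemiring R] [Semiring A] [Bialgebra R A]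
    [AddCommMonoid C] [Module R C] (φ : A →ₗ[R] C) : 1 ∈ leftCoinvariants φ (φ 1) := by
  simp [mem_leftCoinvariants, Algebra.TensorProduct.one_def]

theorem mul_mem_leftCoinvariants {R A C : Type*} [CommRing R] [Ring A] [Bialgebra R A]
    [Module.Flat R A] [AddCommGroup C] [Module R C] {φ : A →ₗ[R] C}
    (hφ : ∀ x y : A, φ y = 0 → φ (x * y) = 0) {c : C} {a b : A}
    (ha : a ∈ leftCoinvariants φ c) (hb : b ∈ leftCoinvariants φ (φ 1)) :
    a * b ∈ leftCoinvariants φ c := by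
  rw [mem_leftCoinvariants] at ha hb ⊢
  have rTensor_comul_sub : φ.rTensor A (comul b - 1 ⊗ₜ[R] b) = 0 := by
    rw [map_sub, hb, LinearMap.rTensor_tmul, sub_self]
  calc φ.rTensor A (comul (a * b))
      = φ.rTensor A (comul a * (1 ⊗ₜ[R] b)) := by
        rw [Bialgebra.comul_mul, ← sub_eq_zero, ← map_sub, ← mul_sub]
        exact rTensor_mul_eq_zero hφ (comul a) rTensor_comul_sub
    _ = (LinearMap.mulRight R b).lTensor C (c ⊗ₜ[R] a) := by rw [rTensor_mul_one_tmul, ha]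
    _ = c ⊗ₜ[R] (a * b) := by simp

theorem stmt6_general {k L C : Type*} [CommRing k] [Ring L] [Bialgebra k L] [Module.Flat k L]
    [AddCommGroup C] [Module k C] (π : L →ₗ[k] C)
    (hker : ∀ x y : L, π y = 0 → π (x * y) = 0) :
    ∃ D : Subalgebra k L, (D : Set L) = {d | π.rTensor L (comul d) = π 1 ⊗ₜ[k] d} ∧
      ∀ d ∈ D, comul d ∈ Submodule.span k {t : L ⊗[k] L | ∃ a ∈ D, ∃ y : L, t = a ⊗ₜ[k] y} :=
  ⟨(leftCoinvariants π (π 1)).toSubalgebra (one_mem_leftCoinvariants π)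
    fun _ _ => mul_mem_leftCoinvariants hker, rfl,
    fun _ => comul_mem_span_tmul_leftCoinvariants⟩

/-- Let `L` be a bialgebra over a field `k`, `C` a `k`-coalgebra with a left
`L`-module structure, and `π : L → C` a surjective `k`-linear coalgebra homomorphism which
is left `L`-linear in the sense that `π (x * y) = x • π y`.  Let
`D = {d ∈ L | (π ⊗ id)(Δ d) = π 1 ⊗ d}`.  Then `D` is a unital subalgebra of `L`
(it contains `1` and is closed under addition, multiplication and scalar multiples), and
for every `d ∈ D` the element `Δ d ∈ L ⊗ L` lies in the image of `D ⊗ L` in `L ⊗ L`;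
that is, `D` is a right `L`-comodule subalgebra of `L`. -/
theorem stmt6 {k L C : Type*} [Field k] [Ring L] [Bialgebra k L]
    [AddCommGroup C] [Module k C] [Coalgebra k C] [Module L C]
    (π : L →ₗc[k] C) (hsurj : Function.Surjective π)
    (hlin : ∀ x y : L, π (x * y) = x • π y) :
    (1 : L) ∈ coactionInvariants π ∧
    (∀ a ∈ coactionInvariants π, ∀ b ∈ coactionInvariants π,
      a + b ∈ coactionInvariants π ∧ a * b ∈ coactionInvariants π) ∧
    (∀ (c : k), ∀ a ∈ coactionInvariants π, c • a ∈ coactionInvariants π) ∧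
    (∀ d ∈ coactionInvariants π,
      Coalgebra.comul (R := k) d ∈ Submodule.span k
        {t : L ⊗[k] L | ∃ a ∈ coactionInvariants π, ∃ y : L, t = a ⊗ₜ[k] y}) := by
  obtain ⟨D, hD, hΔ⟩ := stmt6_general π.toLinearMap fun x y (hy : π y = 0) =>
    (hlin x y).trans (by rw [hy, smul_zero])
  rw [show coactionInvariants π = D from hD.symm]
  exact ⟨D.one_mem, fun a ha b hb => ⟨D.add_mem ha hb, D.mul_mem ha hb⟩,
    fun c a ha => D.smul_mem ha c, hΔ⟩
end

section
/- Let L be a bialgebra over a field k, let C be a k-coalgebra equipped with a left L-module structure, and let π : L → C be a surjective k-linear map which is a coalgebra homomorphism and is left L-linear in the sense that π(x*y) = x • π(y) for all x, y ∈ L (L acting on itself by left multiplication). Define D := {d ∈ L | (π ⊗ id)(Δ_L(d)) = π(1) ⊗ d} and D⁺ := {d ∈ D | ε_L(d) = 0}. Then D⁺ ⊆ ker π, and for every d ∈ D the element Δ_L(d) − 1 ⊗ d of L ⊗ L lies in the image of D⁺ ⊗ L in L ⊗ L. -/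
open TensorProduct

/-!
Let `f : A → M` be a linear map on a flat coalgebra and `g` a group-like element (in the theorem
`f = π` and `g = 1`), and write `ρ = (f ⊗ id) ∘ Δ`, so that `D` is the equalizer of `ρ` and
`f g ⊗ -`. Applying `id ⊗ ε` to `ρ d = f g ⊗ d` gives `f d = ε d • f g`, so `f` kills `D⁺`. For
`d ∈ D`, coassociativity shows that `ρ ⊗ id` and `(f g ⊗ -) ⊗ id` agree on `Δ d`, so by flatness
`Δ d` is in the image of `D ⊗ A`. Finally `x ↦ x - ε x • g` maps `D` into `D⁺`, and applying it to
the first tensor factor turns `Δ d` into `Δ d - g ⊗ d`.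
-/

section Tensor

variable {R M M' N N' P : Type*} [CommSemiring R] [AddCommMonoid M] [Module R M]
  [AddCommMonoid M'] [Module R M'] [AddCommMonoid N] [Module R N]
  [AddCommMonoid N'] [Module R N'] [AddCommMonoid P] [Module R P]

theorem rTensor_lTensor_apply (f : M →ₗ[R] M') (g : N →ₗ[R] N') (t : M ⊗[R] N) :
    f.rTensor N' (g.lTensor M t) = g.lTensor M' (f.rTensor N t) := by
  rw [← LinearMap.comp_apply, LinearMap.rTensor_comp_lTensor, ← LinearMap.lTensor_comp_rTensor,
    LinearMap.comp_apply]

theorem assoc_rTensor_mk_apply (m : M) (t : N ⊗[R] P) :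
    TensorProduct.assoc R M N P ((TensorProduct.mk R M N m).rTensor P t) = m ⊗ₜ[R] t := by
  induction t with
  | zero => simp
  | tmul x y => simp
  | add x y hx hy => simp only [map_add, hx, hy, TensorProduct.tmul_add]

theorem rTensor_mem_range_rTensor_subtype {p : M →ₗ[R] M'} {S : Submodule R M}
    {T : Submodule R M'} (hp : ∀ x ∈ S, p x ∈ T) {t : M ⊗[R] N}
    (ht : t ∈ LinearMap.range (S.subtype.rTensor N)) :
    p.rTensor N t ∈ LinearMap.range (T.subtype.rTensor N) := by
  obtain ⟨s, rfl⟩ := ht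
  refine ⟨(p.restrict hp).rTensor N s, ?_⟩
  rw [← LinearMap.rTensor_comp_apply, LinearMap.subtype_comp_restrict,
    ← LinearMap.rTensor_comp_apply, LinearMap.domRestrict]

theorem range_rTensor_subtype_eq_span (S : Submodule R M) :
    LinearMap.range (S.subtype.rTensor N) =
      Submodule.span R {t : M ⊗[R] N | ∃ a ∈ S, ∃ y : N, t = a ⊗ₜ[R] y} := by
  simp [LinearMap.rTensor, TensorProduct.range_map_eq_span_tmul, eq_comm]

end Tensor

section Flat

variable {R M M' N : Type*} [CommRing R] [AddCommGroup M] [Module R M]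
  [AddCommGroup M'] [Module R M'] [AddCommGroup N] [Module R N]

theorem mem_range_rTensor_subtype_eqLocus [Module.Flat R N] {f g : M →ₗ[R] M'} {t : M ⊗[R] N}
    (ht : f.rTensor N t = g.rTensor N t) :
    t ∈ LinearMap.range ((LinearMap.eqLocus f g).subtype.rTensor N) := by
  rw [LinearMap.eqLocus_eq_ker_sub]
  refine (Module.Flat.rTensor_exact N (LinearMap.exact_subtype_ker_map (f - g)) t).mp ?_
  rw [LinearMap.rTensor_sub, LinearMap.sub_apply, ht, sub_self]

end Flat

section LeftInvariants

open Coalgebra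

variable {R A M : Type*} [CommSemiring R] [AddCommMonoid A] [Module R A] [Coalgebra R A]
  [AddCommMonoid M] [Module R M]

/-- The map `(f ⊗ id) ∘ Δ : A → M ⊗ A`, the left coaction on `A` induced by `f` when `f` is a
coalgebra morphism. -/
def inducedCoaction (f : A →ₗ[R] M) : A →ₗ[R] M ⊗[R] A :=
  f.rTensor A ∘ₗ comul

/-- The submodule `D = {d | (f ⊗ id)(Δ d) = f g ⊗ d}` of left invariants relative to `g`. In a
bialgebra the usual invariants are those for `g = 1`. -/
def leftInvariants (f : A →ₗ[R] M) (g : A) : Submodule R A :=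
  LinearMap.eqLocus (inducedCoaction f) (TensorProduct.mk R M A (f g))

/-- The augmentation part `D⁺ = D ∩ ker ε` of the left invariants `D`. -/
def augmentedLeftInvariants (f : A →ₗ[R] M) (g : A) : Submodule R A :=
  leftInvariants f g ⊓ LinearMap.ker (counit (R := R) (A := A))

variable {f : A →ₗ[R] M} {g d : A}

theorem mem_leftInvariants : d ∈ leftInvariants f g ↔ f.rTensor A (comul d) = f g ⊗ₜ[R] d :=
  Iff.rfl

theorem mem_augmentedLeftInvariants :
    d ∈ augmentedLeftInvariants f g ↔ d ∈ leftInvariants f g ∧ counit (R := R) d = 0 :=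
  Iff.rfl

theorem apply_eq_counit_smul_of_mem_leftInvariants (hd : d ∈ leftInvariants f g) :
    f d = counit (R := R) d • f g := by
  have h : f d ⊗ₜ[R] (1 : R) = f g ⊗ₜ[R] counit (R := R) d := calc
    f d ⊗ₜ[R] (1 : R) = f.rTensor R (counit.lTensor A (comul d)) := by
      rw [lTensor_counit_comul, LinearMap.rTensor_tmul]
    _ = counit.lTensor M (f.rTensor A (comul d)) := by
      rw [rTensor_lTensor_apply]
    _ = f g ⊗ₜ[R] counit (R := R) d := by
      rw [mem_leftInvariants.mp hd, LinearMap.lTensor_tmul]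
  simpa using congrArg (TensorProduct.rid R M) h

theorem assoc_rTensor_inducedCoaction_comul (f : A →ₗ[R] M) (d : A) :
    TensorProduct.assoc R M A A ((inducedCoaction f).rTensor A (comul d)) =
      comul.lTensor M (inducedCoaction f d) := calc
  _ = TensorProduct.assoc R M A A ((f.rTensor A).rTensor A (comul.rTensor A (comul d))) := by
    rw [inducedCoaction, LinearMap.rTensor_comp_apply]
  _ = f.rTensor (A ⊗[R] A) (TensorProduct.assoc R A A A (comul.rTensor A (comul d))) := by
    simp [LinearMap.rTensor_tensor]
  _ = f.rTensor (A ⊗[R] A) (comul.lTensor A (comul d)) := by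
    rw [coassoc_apply]
  _ = comul.lTensor M (inducedCoaction f d) := by
    rw [rTensor_lTensor_apply, inducedCoaction, LinearMap.comp_apply]

theorem self_mem_leftInvariants (hg : IsGroupLikeElem R g) : g ∈ leftInvariants f g := by
  rw [mem_leftInvariants, hg.comul_eq_tmul_self, LinearMap.rTensor_tmul]

end LeftInvariants

section FlatCoalgebra

open Coalgebra

variable {R A M : Type*} [CommRing R] [AddCommGroup A] [Module R A] [Coalgebra R A]
  [AddCommGroup M] [Module R M] {f : A →ₗ[R] M} {g d : A}

theorem comul_mem_range_rTensor_leftInvariants [Module.Flat R A] (hd : d ∈ leftInvariants f g) :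
    comul d ∈ LinearMap.range ((leftInvariants f g).subtype.rTensor A) := by
  refine mem_range_rTensor_subtype_eqLocus ((TensorProduct.assoc R M A A).injective ?_)
  calc
    _ = comul.lTensor M (inducedCoaction f d) := assoc_rTensor_inducedCoaction_comul f d
    _ = comul.lTensor M (f g ⊗ₜ[R] d) := congrArg _ hd
    _ = f g ⊗ₜ[R] comul d := LinearMap.lTensor_tmul ..
    _ = _ := (assoc_rTensor_mk_apply (f g) (comul d)).symm

variable (R) in
/-- The map `x ↦ x - ε x • g`; it projects onto `ker ε` along `g` when `ε g = 1`. -/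
def counitProjection (g : A) : A →ₗ[R] A :=
  LinearMap.id - LinearMap.toSpanSingleton R A g ∘ₗ counit

theorem counitProjection_apply (g x : A) :
    counitProjection R g x = x - counit (R := R) x • g :=
  rfl

theorem rTensor_counitProjection_comul (g d : A) :
    (counitProjection R g).rTensor A (comul d) = comul d - g ⊗ₜ[R] d := by
  rw [counitProjection, LinearMap.rTensor_sub, LinearMap.sub_apply, LinearMap.rTensor_id_apply,
    LinearMap.rTensor_comp_apply, rTensor_counit_comul, LinearMap.rTensor_tmul,
    LinearMap.toSpanSingleton_apply, one_smul]

theorem counitProjection_mem_augmentedLeftInvariants (hg : IsGroupLikeElem R g)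
    (hd : d ∈ leftInvariants f g) :
    counitProjection R g d ∈ augmentedLeftInvariants f g := by
  rw [counitProjection_apply, mem_augmentedLeftInvariants]
  exact ⟨sub_mem hd (Submodule.smul_mem _ _ (self_mem_leftInvariants hg)),
    by simp [hg.counit_eq_one]⟩

theorem comul_sub_tmul_mem_range_rTensor_augmentedLeftInvariants [Module.Flat R A]
    (hg : IsGroupLikeElem R g) (hd : d ∈ leftInvariants f g) :
    comul d - g ⊗ₜ[R] d ∈
      LinearMap.range ((augmentedLeftInvariants f g).subtype.rTensor A) := by
  rw [← rTensor_counitProjection_comul]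
  exact rTensor_mem_range_rTensor_subtype
    (fun _ hx => counitProjection_mem_augmentedLeftInvariants hg hx)
    (comul_mem_range_rTensor_leftInvariants hd)

theorem stmt7_general [Module.Flat R A] (f : A →ₗ[R] M) (hg : IsGroupLikeElem R g) :
    (∀ d ∈ leftInvariants f g, counit (R := R) d = 0 → f d = 0) ∧
    (∀ d ∈ leftInvariants f g, comul d - g ⊗ₜ[R] d ∈ Submodule.span R
      {t : A ⊗[R] A | ∃ a ∈ leftInvariants f g,
        counit (R := R) a = 0 ∧ ∃ y : A, t = a ⊗ₜ[R] y}) := by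
  refine ⟨fun d hd hε => ?_, fun d hd => ?_⟩
  · rw [apply_eq_counit_smul_of_mem_leftInvariants hd, hε, zero_smul]
  · have h := comul_sub_tmul_mem_range_rTensor_augmentedLeftInvariants hg hd
    simpa only [range_rTensor_subtype_eq_span, mem_augmentedLeftInvariants, and_assoc] using h

end FlatCoalgebra

/-- Let `L` be a bialgebra over a field `k`, `C` a `k`-coalgebra with a left
`L`-module structure, and `π : L → C` a surjective `k`-linear coalgebra homomorphism which
is left `L`-linear in the sense that `π (x * y) = x • π y`.  Let
`D = {d ∈ L | (π ⊗ id)(Δ d) = π 1 ⊗ d}` and `D⁺ = {d ∈ D | ε d = 0}`.  Then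
`D⁺ ⊆ ker π`, and for every `d ∈ D` the element `Δ d - 1 ⊗ d` of `L ⊗ L` lies in the
image of `D⁺ ⊗ L` in `L ⊗ L`. -/
theorem stmt7 {k L C : Type*} [Field k] [Ring L] [Bialgebra k L]
    [AddCommGroup C] [Module k C] [Coalgebra k C] [Module L C]
    (π : L →ₗc[k] C) (hsurj : Function.Surjective π)
    (hlin : ∀ x y : L, π (x * y) = x • π y) :
    (∀ d ∈ coactionInvariants π, Coalgebra.counit (R := k) d = 0 → π d = 0) ∧
    (∀ d ∈ coactionInvariants π,
      Coalgebra.comul (R := k) d - (1 : L) ⊗ₜ[k] d ∈ Submodule.span k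
        {t : L ⊗[k] L | ∃ a ∈ coactionInvariants π,
          Coalgebra.counit (R := k) a = 0 ∧ ∃ y : L, t = a ⊗ₜ[k] y}) :=
  stmt7_general π.toLinearMap IsGroupLikeElem.one
end

section
/- Let k be a field, ι an additive group, and A an associative unital k-algebra equipped with a strong ι-grading 𝒜 : ι → Submodule k A (so A decomposes as the internal direct sum of the 𝒜 i, multiplication respects degrees, and 𝒜 i * 𝒜 j = 𝒜 (i+j) for all i, j ∈ ι). Fix γ ∈ ι, n ∈ ℕ, and elements e₁,…,eₙ ∈ 𝒜 γ. Then (e₁,…,eₙ) is a basis of 𝒜 γ as a left module over the degree-zero subalgebra 𝒜 0 — i.e., every a ∈ 𝒜 γ can be written as a = Σᵢ bᵢ * eᵢ with bᵢ ∈ 𝒜 0, and such a representation is unique — if and only if there exist elements f₁,…,fₙ ∈ 𝒜 (−γ) such that eⱼ * fᵢ = δ_{ij}·1 for all i, j ∈ {1,…,n} and Σᵢ fᵢ * eᵢ = 1. -/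
/-!
Only three pieces of the grading matter: `B = 𝒜 0`, `E = 𝒜 γ` and `F = 𝒜 (-γ)`, with
`E * F ≤ B`, `F * B ≤ F` and `1 ∈ F * E`. Write `1` as a sum of products `u * v` with `u ∈ F` and
`v ∈ E`; expanding every `v` in the basis `e` and collecting coefficients gives `1 = ∑ i, f i * e i`
with `f i ∈ F`. Multiplying by `e j` on the left, `e j = ∑ i, (e j * f i) * e i`, and uniqueness of
coordinates forces `e j * f i = δ i j`. Conversely, right multiplication by `f i` is the `i`-th
coordinate functional with respect to `e`.
-/

section Semiring

variable {κ A : Type*} [Fintype κ] [Semiring A] {e f : κ → A}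

lemma sum_mul_mul_eq_of_sum_mul_eq_one (hsum : ∑ i, f i * e i = 1) (a : A) :
    ∑ i, a * f i * e i = a := by
  simp only [mul_assoc, ← Finset.mul_sum, hsum, mul_one]

variable [DecidableEq κ]

lemma sum_mul_mul_eq_coeff (hdual : ∀ i j, e j * f i = if i = j then 1 else 0)
    (b : κ → A) (i : κ) : (∑ j, b j * e j) * f i = b i := by
  simp [Finset.sum_mul, mul_assoc, hdual]

lemma injective_sum_mul_of_dual (hdual : ∀ i j, e j * f i = if i = j then 1 else 0) :
    Function.Injective fun b : κ → A ↦ ∑ i, b i * e i := by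
  intro b b' h
  funext i
  calc b i = (∑ j, b j * e j) * f i := (sum_mul_mul_eq_coeff hdual b i).symm
    _ = (∑ j, b' j * e j) * f i := congrArg (· * f i) h
    _ = b' i := sum_mul_mul_eq_coeff hdual b' i

end Semiring

section Submodule

variable {R κ A : Type*} [CommSemiring R] [Fintype κ] [Semiring A] [Algebra R A]
  {B E F : Submodule R A} {e f : κ → A}

lemma exists_sum_mul_eq_of_mem_mul (hFB : F * B ≤ F)
    (hspan : ∀ a ∈ E, ∃ b : κ → A, (∀ i, b i ∈ B) ∧ a = ∑ i, b i * e i) {x : A}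
    (hx : x ∈ F * E) : ∃ f : κ → A, (∀ i, f i ∈ F) ∧ ∑ i, f i * e i = x := by
  induction hx using Submodule.mul_induction_on' with
  | mem_mul_mem u hu v hv =>
    obtain ⟨b, hb, rfl⟩ := hspan v hv
    refine ⟨fun i ↦ u * b i, fun i ↦ hFB (Submodule.mul_mem_mul hu (hb i)), ?_⟩
    simp only [mul_assoc, Finset.mul_sum]
  | add x _ y _ ihx ihy =>
    obtain ⟨f, hf, rfl⟩ := ihx
    obtain ⟨g, hg, rfl⟩ := ihy
    refine ⟨f + g, fun i ↦ add_mem (hf i) (hg i), ?_⟩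
    simp only [Pi.add_apply, add_mul, Finset.sum_add_distrib]

variable [DecidableEq κ]

lemma mul_eq_ite_of_sum_mul_eq_one (hB : 1 ∈ B) (hEF : E * F ≤ B)
    (he : ∀ i, e i ∈ E) (hf : ∀ i, f i ∈ F)
    (huniq : ∀ b b' : κ → A, (∀ i, b i ∈ B) → (∀ i, b' i ∈ B) →
      ∑ i, b i * e i = ∑ i, b' i * e i → b = b')
    (hsum : ∑ i, f i * e i = 1) (i j : κ) : e j * f i = if i = j then 1 else 0 := by
  have hmem (i : κ) : e j * f i ∈ B := hEF (Submodule.mul_mem_mul (he j) (hf i))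
  have hdelta (i : κ) : (if i = j then 1 else 0 : A) ∈ B := by
    split_ifs
    exacts [hB, zero_mem B]
  have hexpand : ∑ i, e j * f i * e i = ∑ i, (if i = j then 1 else 0) * e i := by
    simpa using sum_mul_mul_eq_of_sum_mul_eq_one hsum (e j)
  exact congrFun (huniq _ _ hmem hdelta hexpand) i

theorem stmt8_general (hB : 1 ∈ B) (hEF : E * F ≤ B) (hFB : F * B ≤ F) (hFE : 1 ∈ F * E)
    (he : ∀ i, e i ∈ E) :
    ((∀ a ∈ E, ∃ b : κ → A, (∀ i, b i ∈ B) ∧ a = ∑ i, b i * e i) ∧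
      (∀ b b' : κ → A, (∀ i, b i ∈ B) → (∀ i, b' i ∈ B) →
        ∑ i, b i * e i = ∑ i, b' i * e i → b = b')) ↔
    (∃ f : κ → A, (∀ i, f i ∈ F) ∧
      (∀ i j, e j * f i = if i = j then 1 else 0) ∧ (∑ i, f i * e i = 1)) := by
  constructor
  · rintro ⟨hspan, huniq⟩
    obtain ⟨f, hf, hsum⟩ := exists_sum_mul_eq_of_mem_mul hFB hspan hFE
    exact ⟨f, hf, mul_eq_ite_of_sum_mul_eq_one hB hEF he hf huniq hsum, hsum⟩
  · rintro ⟨f, hf, hdual, hsum⟩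
    refine ⟨fun a ha ↦ ⟨fun i ↦ a * f i, fun i ↦ ?_, ?_⟩,
      fun _ _ _ _ h ↦ injective_sum_mul_of_dual hdual h⟩
    · exact hEF (Submodule.mul_mem_mul ha (hf i))
    · exact (sum_mul_mul_eq_of_sum_mul_eq_one hsum a).symm

end Submodule

/-- Let `k` be a field, `ι` an additive group, and `A` a `k`-algebra with a
strong `ι`-grading `𝒜` (so `𝒜 i * 𝒜 j = 𝒜 (i + j)` for all `i, j`).  Fix `γ ∈ ι`,
`n ∈ ℕ` and `e₁, …, eₙ ∈ 𝒜 γ`.  Then `(e₁, …, eₙ)` is a basis of `𝒜 γ` as a left module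
over the degree-zero part `𝒜 0` — every `a ∈ 𝒜 γ` is uniquely `∑ᵢ bᵢ * eᵢ` with
`bᵢ ∈ 𝒜 0` — if and only if there exist `f₁, …, fₙ ∈ 𝒜 (-γ)` with `eⱼ * fᵢ = δᵢⱼ · 1`
and `∑ᵢ fᵢ * eᵢ = 1`. -/
theorem stmt8 {k ι A : Type*} [Field k] [AddGroup ι] [DecidableEq ι]
    [Ring A] [Algebra k A] (𝒜 : ι → Submodule k A) [GradedAlgebra 𝒜]
    (hstrong : ∀ i j : ι, 𝒜 i * 𝒜 j = 𝒜 (i + j))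
    (γ : ι) (n : ℕ) (e : Fin n → A) (he : ∀ i, e i ∈ 𝒜 γ) :
    ((∀ a ∈ 𝒜 γ, ∃ b : Fin n → A, (∀ i, b i ∈ 𝒜 0) ∧ a = ∑ i, b i * e i) ∧
      (∀ b b' : Fin n → A, (∀ i, b i ∈ 𝒜 0) → (∀ i, b' i ∈ 𝒜 0) →
        ∑ i, b i * e i = ∑ i, b' i * e i → b = b')) ↔
    (∃ f : Fin n → A, (∀ i, f i ∈ 𝒜 (-γ)) ∧
      (∀ i j, e j * f i = if i = j then 1 else 0) ∧ (∑ i, f i * e i = 1)) := by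
  have one_mem : (1 : A) ∈ 𝒜 0 := SetLike.GradedOne.one_mem
  exact stmt8_general one_mem (by simp [hstrong]) (by simp [hstrong]) (by simpa [hstrong]) he
end

section
/- Let k be a field, ι an additive group, and A an associative unital k-algebra equipped with a strong ι-grading 𝒜 : ι → Submodule k A (𝒜 i * 𝒜 j = 𝒜 (i+j) for all i, j). Suppose in addition that there exists a k-algebra homomorphism (character) χ : A → k. Then for each γ ∈ ι, the degree-γ component 𝒜 γ is free as a left module over the degree-zero subalgebra 𝒜 0 — i.e., there exist n ∈ ℕ and e₁,…,eₙ ∈ 𝒜 γ such that every a ∈ 𝒜 γ is uniquely of the form Σᵢ bᵢ * eᵢ with bᵢ ∈ 𝒜 0 — if and only if there exist x ∈ 𝒜 γ and y ∈ 𝒜 (−γ) with x * y = 1 and y * x = 1. -/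
/-!
Put a left basis `e` of `𝒜 γ` over `𝒜 0` in a column. Expanding `1 ∈ 𝒜 (-γ) * 𝒜 γ` in this basis
gives a row `y` with entries in `𝒜 (-γ)` and `∑ i, y i * e i = 1`. Multiplying by `e j` on the left
and comparing coefficients gives `e j * y i = δ i j`, so `e` and `y` are mutually inverse
rectangular matrices. A character forces `A` to have invariant basis number, so these matrices are
`1 × 1` and `e` is a homogeneous unit.
-/

open Matrix

theorem invariantBasisNumber_of_ringHom {R S : Type*} [Semiring R] [Semiring S]
    [InvariantBasisNumber S] (f : R →+* S) : InvariantBasisNumber R := by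
  refine invariantBasisNumber_iff_matrix.mpr fun n m M N hMN hNM ↦ ?_
  have map_mul_map_eq_one {p q : ℕ} {P : Matrix (Fin p) (Fin q) R} {Q : Matrix (Fin q) (Fin p) R}
      (hPQ : P * Q = 1) : P.map f * Q.map f = 1 := by
    rw [← Matrix.map_mul, hPQ, Matrix.map_one f (map_zero f) (map_one f)]
  exact invariantBasisNumber_iff_matrix.mp ‹_› n m (M.map f) (N.map f)
    (map_mul_map_eq_one hMN) (map_mul_map_eq_one hNM)

theorem card_eq_one_of_dotProduct_eq_one_of_vecMulVec_eq_one {A κ : Type*} [Semiring A]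
    [InvariantBasisNumber A] [Fintype κ] [DecidableEq κ] {e y : κ → A}
    (hye : y ⬝ᵥ e = 1) (hey : vecMulVec e y = 1) : Fintype.card κ = 1 := by
  have col_mul_row : replicateCol Unit e * replicateRow Unit y = 1 := by
    rw [← vecMulVec_eq, hey]
  have row_mul_col : replicateRow Unit y * replicateCol Unit e = 1 := by
    ext
    simpa [Matrix.mul_apply, dotProduct] using hye
  simpa using square_of_invertible _ _ col_mul_row row_mul_col

section IsLeftBasis

variable {R A κ : Type*} [CommSemiring R] [Semiring A] [Algebra R A] [Fintype κ]
  {B M N : Submodule R A} {e y : κ → A}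

/-- The family `e` is a basis of `M` as a left `B`-module: every element of `M` is uniquely of the
form `∑ i, b i * e i` with coefficients in `B`. The modules are encoded as submodules of an ambient
algebra whose multiplication provides the action. -/
def IsLeftBasis (B M : Submodule R A) (e : κ → A) : Prop :=
  (∀ i, e i ∈ M) ∧
  (∀ a ∈ M, ∃ b : κ → A, (∀ i, b i ∈ B) ∧ a = b ⬝ᵥ e) ∧
  (∀ b b' : κ → A, (∀ i, b i ∈ B) → (∀ i, b' i ∈ B) → b ⬝ᵥ e = b' ⬝ᵥ e → b = b')

theorem IsLeftBasis.exists_eq_dotProduct_of_mem_mul (he : IsLeftBasis B M e) (hNB : N * B ≤ N)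
    {z : A} (hz : z ∈ N * M) : ∃ y : κ → A, (∀ i, y i ∈ N) ∧ z = y ⬝ᵥ e := by
  induction hz using Submodule.mul_induction_on' with
  | mem_mul_mem u hu v hv =>
    obtain ⟨b, hb, rfl⟩ := he.2.1 v hv
    exact ⟨u • b, fun i ↦ hNB (Submodule.mul_mem_mul hu (hb i)), (smul_dotProduct u b e).symm⟩
  | add z _ w _ ihz ihw =>
    obtain ⟨y, hy, rfl⟩ := ihz
    obtain ⟨y', hy', rfl⟩ := ihw
    exact ⟨y + y', fun i ↦ add_mem (hy i) (hy' i), (add_dotProduct y y' e).symm⟩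

theorem IsLeftBasis.vecMulVec_eq_one [DecidableEq κ] (he : IsLeftBasis B M e) (hB : 1 ∈ B)
    (hMN : M * N ≤ B) (hy : ∀ i, y i ∈ N) (hye : y ⬝ᵥ e = 1) : vecMulVec e y = 1 := by
  ext j i
  have coeff_eq : e j • y = (1 : Matrix κ κ A) j := by
    refine he.2.2 _ _ (fun i ↦ hMN (Submodule.mul_mem_mul (he.1 j) (hy i))) (fun i ↦ ?_) ?_
    · rw [one_apply]
      split_ifs
      exacts [hB, zero_mem B]
    · rw [smul_dotProduct, hye, smul_eq_mul, mul_one]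
      exact (congrFun (one_mulVec e) j).symm
  exact congrFun coeff_eq i

theorem isLeftBasis_of_vecMulVec_eq_one [DecidableEq κ] (hMN : M * N ≤ B) (he : ∀ i, e i ∈ M)
    (hy : ∀ i, y i ∈ N) (hye : y ⬝ᵥ e = 1) (hey : vecMulVec e y = 1) : IsLeftBasis B M e := by
  refine ⟨he, fun a ha ↦ ⟨a • y, fun i ↦ hMN (Submodule.mul_mem_mul ha (hy i)), ?_⟩,
    fun b b' _ _ hbb' ↦ ?_⟩
  · rw [smul_dotProduct, hye, smul_eq_mul, mul_one]
  · have coeff_eq (c : κ → A) : (c ⬝ᵥ e) • y = c := by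
      rw [← vecMul_vecMulVec, hey, vecMul_one]
    rw [← coeff_eq b, hbb', coeff_eq b']

theorem IsLeftBasis.exists_mul_eq_one [InvariantBasisNumber A] (he : IsLeftBasis B M e)
    (hB : 1 ∈ B) (hNB : N * B ≤ N) (hMN : M * N ≤ B) (hNM : 1 ∈ N * M) :
    ∃ x ∈ M, ∃ y ∈ N, x * y = 1 ∧ y * x = 1 := by
  classical
  obtain ⟨y, hy, hye⟩ := he.exists_eq_dotProduct_of_mem_mul hNB hNM
  have hey := he.vecMulVec_eq_one hB hMN hy hye.symm
  have card_eq_one := card_eq_one_of_dotProduct_eq_one_of_vecMulVec_eq_one hye.symm hey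
  obtain ⟨i, eq_i⟩ := Fintype.card_eq_one_iff.mp card_eq_one
  refine ⟨e i, he.1 i, y i, hy i, ?_, ?_⟩
  · rw [← vecMulVec_apply, hey, one_apply_eq]
  · rw [hye, dotProduct, Fintype.sum_eq_single i fun j hj ↦ absurd (eq_i j) hj]

theorem isLeftBasis_const_of_mul_eq_one [Unique κ] (hMN : M * N ≤ B) {x y : A}
    (hx : x ∈ M) (hy : y ∈ N) (hxy : x * y = 1) (hyx : y * x = 1) :
    IsLeftBasis B M (fun _ : κ ↦ x) := by
  refine isLeftBasis_of_vecMulVec_eq_one (y := fun _ ↦ y) hMN (fun _ ↦ hx) (fun _ ↦ hy) ?_ ?_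
  · rw [dotProduct, Fintype.sum_unique, hyx]
  · ext i j
    rw [vecMulVec_apply, hxy, Subsingleton.elim i j, one_apply_eq]

end IsLeftBasis

theorem mul_le_of_gradedMonoid {R ι A : Type*} [CommSemiring R] [AddMonoid ι] [Semiring A]
    [Algebra R A] (𝒜 : ι → Submodule R A) [SetLike.GradedMonoid 𝒜] (i j : ι) :
    𝒜 i * 𝒜 j ≤ 𝒜 (i + j) :=
  Submodule.mul_le.mpr fun _ ha _ hb ↦ SetLike.mul_mem_graded ha hb

theorem stmt9_general {R ι A : Type*} [CommSemiring R] [AddGroup ι] [Semiring A] [Algebra R A]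
    [InvariantBasisNumber A] (𝒜 : ι → Submodule R A) [SetLike.GradedMonoid 𝒜] (γ : ι)
    (hγ : 1 ∈ 𝒜 (-γ) * 𝒜 γ) :
    (∃ n : ℕ, ∃ e : Fin n → A, IsLeftBasis (𝒜 0) (𝒜 γ) e) ↔
    (∃ x ∈ 𝒜 γ, ∃ y ∈ 𝒜 (-γ), x * y = 1 ∧ y * x = 1) := by
  have hMN : 𝒜 γ * 𝒜 (-γ) ≤ 𝒜 0 := by simpa using mul_le_of_gradedMonoid 𝒜 γ (-γ)
  constructor
  · rintro ⟨n, e, he⟩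
    have hNB : 𝒜 (-γ) * 𝒜 0 ≤ 𝒜 (-γ) := by simpa using mul_le_of_gradedMonoid 𝒜 (-γ) 0
    exact he.exists_mul_eq_one (SetLike.one_mem_graded 𝒜) hNB hMN hγ
  · rintro ⟨x, hx, y, hy, hxy, hyx⟩
    exact ⟨1, fun _ ↦ x, isLeftBasis_const_of_mul_eq_one hMN hx hy hxy hyx⟩

/-- Let `k` be a field, `ι` an additive group, and `A` a `k`-algebra with a
strong `ι`-grading `𝒜` (`𝒜 i * 𝒜 j = 𝒜 (i + j)` for all `i, j`), and suppose there is a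
`k`-algebra character `χ : A → k`.  Then for each `γ ∈ ι` the component `𝒜 γ` is free as
a left module over the degree-zero part `𝒜 0` — there are `n` and `e₁, …, eₙ ∈ 𝒜 γ`
such that every `a ∈ 𝒜 γ` is uniquely `∑ᵢ bᵢ * eᵢ` with `bᵢ ∈ 𝒜 0` — if and only if
there exist `x ∈ 𝒜 γ` and `y ∈ 𝒜 (-γ)` with `x * y = 1` and `y * x = 1`. -/
theorem stmt9 {k ι A : Type*} [Field k] [AddGroup ι] [DecidableEq ι]
    [Ring A] [Algebra k A] (𝒜 : ι → Submodule k A) [GradedAlgebra 𝒜]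
    (hstrong : ∀ i j : ι, 𝒜 i * 𝒜 j = 𝒜 (i + j))
    (χ : A →ₐ[k] k) (γ : ι) :
    (∃ n : ℕ, ∃ e : Fin n → A, (∀ i, e i ∈ 𝒜 γ) ∧
      (∀ a ∈ 𝒜 γ, ∃ b : Fin n → A, (∀ i, b i ∈ 𝒜 0) ∧ a = ∑ i, b i * e i) ∧
      (∀ b b' : Fin n → A, (∀ i, b i ∈ 𝒜 0) → (∀ i, b' i ∈ 𝒜 0) →
        ∑ i, b i * e i = ∑ i, b' i * e i → b = b')) ↔
    (∃ x ∈ 𝒜 γ, ∃ y ∈ 𝒜 (-γ), x * y = 1 ∧ y * x = 1) := by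
  have := invariantBasisNumber_of_ringHom χ.toRingHom
  exact stmt9_general 𝒜 γ (by simpa [hstrong] using SetLike.one_mem_graded 𝒜)
end

section
/- Let R be a ring, N a positive natural number, and I : Fin N → Ideal R a family of two-sided ideals such that (1) ⋂ᵢ I i = 0, and (2) the sublattice of the ideal lattice of R generated by {I 0,…,I (N−1)} under sums and intersections is distributive, i.e., J ∩ (K + L) = J ∩ K + J ∩ L for all J, K, L in the closure of {I i} under finite sums and intersections. For i, j let πᶦⱼ : R/I i → R/(I i + I j) denote the canonical quotient-of-quotient maps. Then the canonical ring homomorphism χ : R → Π_{i} R/I i, r ↦ (r mod I i)ᵢ, is injective and its range is exactly the multipullback {(xᵢ)ᵢ ∈ Πᵢ R/I i | πᶦⱼ(xᵢ) = πʲᵢ(xⱼ) for all i, j}; in particular χ is a ring isomorphism onto this subring. -/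
/-- The canonical factor ("quotient of quotient") map `R/I → R/J` for two-sided ideals
`I ≤ J`. -/
def TwoSidedIdeal.factor {R : Type*} [Ring R] (I J : TwoSidedIdeal R) (h : I ≤ J) :
    I.ringCon.Quotient → J.ringCon.Quotient :=
  Quotient.map' id fun a b hab => (J.rel_iff a b).2 (h ((I.rel_iff a b).1 hab))

/-- The sublattice of the ideal lattice of `R` generated by the family `I` under joins
(sums) and meets (intersections): the smallest collection of two-sided ideals containing
all the `I i` and closed under `⊔` and `⊓`. -/
def latticeGen {R : Type*} [Ring R] {N : ℕ} (I : Fin N → TwoSidedIdeal R) :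
    Set (TwoSidedIdeal R) :=
  ⋂₀ {S : Set (TwoSidedIdeal R) | Set.range I ⊆ S ∧
      (∀ a ∈ S, ∀ b ∈ S, a ⊔ b ∈ S) ∧ (∀ a ∈ S, ∀ b ∈ S, a ⊓ b ∈ S)}

/-!
Lift the coordinates of a compatible tuple to `a i : R` and solve `r ≡ a i` modulo `I i` one index
at a time, as in the Chinese remainder theorem. If `r` solves the congruences indexed by `s`, then
`r - a j` lies in `⋂ i ∈ s, (I i + I j)`, which by distributivity is `(⋂ i ∈ s, I i) + I j`.
Subtracting from `r` the first summand of such a decomposition of `r - a j` gives a solution for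
`s ∪ {j}`.
-/

section DistributiveSublattice

variable {α ι : Type*} [Lattice α] {S : Set α} {f : ι → α} {b : α}

theorem finset_inf'_sup_distrib_right_of_isSublattice (hS : IsSublattice S)
    (hdistrib : ∀ a ∈ S, ∀ b ∈ S, ∀ c ∈ S, a ⊓ (b ⊔ c) = a ⊓ b ⊔ a ⊓ c)
    {s : Finset ι} (hs : s.Nonempty) (hf : ∀ i, f i ∈ S) (hb : b ∈ S) :
    s.inf' hs f ⊔ b = s.inf' hs fun i => f i ⊔ b := by
  let L : Sublattice α := ⟨S, hS.supClosed, hS.infClosed⟩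
  let _ : DistribLattice L :=
    .ofInfSupLe fun a b c => (hdistrib a a.2 b b.2 c c.2).le
  have distrib_in_L := Finset.inf'_sup_distrib_right (α := L) hs (fun i => ⟨f i, hf i⟩) ⟨b, hb⟩
  simpa [Function.comp_def] using congrArg L.subtype distrib_in_L

theorem finset_inf_sup_distrib_right_of_isSublattice [OrderTop α] (hS : IsSublattice S)
    (hdistrib : ∀ a ∈ S, ∀ b ∈ S, ∀ c ∈ S, a ⊓ (b ⊔ c) = a ⊓ b ⊔ a ⊓ c)
    (s : Finset ι) (hf : ∀ i, f i ∈ S) (hb : b ∈ S) :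
    s.inf f ⊔ b = s.inf fun i => f i ⊔ b := by
  rcases s.eq_empty_or_nonempty with rfl | hs
  · simp
  · simpa only [Finset.inf'_eq_inf] using
      finset_inf'_sup_distrib_right_of_isSublattice hS hdistrib hs hf hb

end DistributiveSublattice

section LatticeGen

variable {R : Type*} [Ring R] {N : ℕ} (I : Fin N → TwoSidedIdeal R)

theorem mem_latticeGen (i : Fin N) : I i ∈ latticeGen I :=
  fun _ hS => hS.1 ⟨i, rfl⟩

theorem isSublattice_latticeGen : IsSublattice (latticeGen I) where
  supClosed J hJ K hK S hS := hS.2.1 J (hJ S hS) K (hK S hS)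
  infClosed J hJ K hK S hS := hS.2.2 J (hJ S hS) K (hK S hS)

end LatticeGen

section Congruences

variable {R ι : Type*} [NonUnitalNonAssocRing R] {I : ι → TwoSidedIdeal R} {a : ι → R}

theorem mem_finset_inf_twoSidedIdeal {s : Finset ι} {x : R} : x ∈ s.inf I ↔ ∀ i ∈ s, x ∈ I i := by
  rw [Finset.inf_eq_iInf, iInf_subtype', TwoSidedIdeal.mem_iInf, Subtype.forall]

theorem exists_sub_mem_and_sub_mem_of_sub_mem_sup {J K : TwoSidedIdeal R} {x y : R}
    (h : x - y ∈ J ⊔ K) : ∃ r, r - x ∈ J ∧ r - y ∈ K := by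
  obtain ⟨u, hu, v, hv, huv⟩ := TwoSidedIdeal.mem_sup.1 h
  refine ⟨x - u, ?_, ?_⟩
  · simpa using neg_mem hu
  · rwa [sub_right_comm, ← huv, add_sub_cancel_left]

theorem exists_forall_sub_mem_of_inf_sup_le
    (hI : ∀ (s : Finset ι) (j : ι), (s.inf fun i => I i ⊔ I j) ≤ s.inf I ⊔ I j)
    (ha : ∀ i j, a i - a j ∈ I i ⊔ I j) (s : Finset ι) : ∃ r, ∀ i ∈ s, r - a i ∈ I i := by
  induction s using Finset.cons_induction with
  | empty => exact ⟨0, by simp⟩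
  | cons j s _ ih =>
    obtain ⟨r, hr⟩ := ih
    have sub_mem_sup : ∀ i ∈ s, r - a j ∈ I i ⊔ I j := fun i hi => by
      simpa using add_mem (TwoSidedIdeal.mem_sup_left (hr i hi)) (ha i j)
    obtain ⟨r', hr'r, hr'j⟩ := exists_sub_mem_and_sub_mem_of_sub_mem_sup
      (hI s j (mem_finset_inf_twoSidedIdeal.2 sub_mem_sup))
    refine ⟨r', (Finset.forall_mem_cons _ _).2 ⟨hr'j, fun i hi => ?_⟩⟩
    simpa using add_mem (mem_finset_inf_twoSidedIdeal.1 hr'r i hi) (hr i hi)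

end Congruences

section Quotients

variable {R ι : Type*} [Ring R]

theorem ringCon_mk'_eq_iff_sub_mem {I : TwoSidedIdeal R} {x y : R} :
    I.ringCon.mk' x = I.ringCon.mk' y ↔ x - y ∈ I :=
  I.ringCon.eq.trans (I.rel_iff x y)

theorem factor_mk'_eq_factor_mk'_iff {I J K : TwoSidedIdeal R} (hI : I ≤ K) (hJ : J ≤ K)
    {x y : R} :
    TwoSidedIdeal.factor I K hI (I.ringCon.mk' x) = TwoSidedIdeal.factor J K hJ (J.ringCon.mk' y) ↔
      x - y ∈ K :=
  ringCon_mk'_eq_iff_sub_mem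

/-- The multipullback of the quotients `R/I i` over the `R/(I i + I j)`, the candidate for the image
of `R` in the product of the `R/I i`. Only its underlying set is needed, so the subring structure
is not recorded. -/
def multipullback (I : ι → TwoSidedIdeal R) : Set (∀ i, (I i).ringCon.Quotient) :=
  {x | ∀ i j, TwoSidedIdeal.factor (I i) (I i ⊔ I j) le_sup_left (x i) =
    TwoSidedIdeal.factor (I j) (I i ⊔ I j) le_sup_right (x j)}

variable {I : ι → TwoSidedIdeal R}

theorem ringHom_pi_mk'_injective (hI : ∀ r, (∀ i, r ∈ I i) → r = 0) :
    Function.Injective (RingHom.pi fun i => (I i).ringCon.mk') := fun _ _ hxy =>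
  sub_eq_zero.1 (hI _ fun i => ringCon_mk'_eq_iff_sub_mem.1 (congrFun hxy i))

theorem range_ringHom_pi_mk'_eq_multipullback [Finite ι]
    (hI : ∀ (s : Finset ι) (j : ι), (s.inf fun i => I i ⊔ I j) ≤ s.inf I ⊔ I j) :
    Set.range (RingHom.pi fun i => (I i).ringCon.mk') = multipullback I := by
  refine Set.Subset.antisymm (Set.range_subset_iff.2 fun r i j => rfl) fun x hx => ?_
  cases nonempty_fintype ι
  choose a ha using fun i => (I i).ringCon.mk'_surjective (x i)
  obtain rfl : (fun i => (I i).ringCon.mk' (a i)) = x := funext ha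
  obtain ⟨r, hr⟩ := exists_forall_sub_mem_of_inf_sup_le hI
    (fun i j => (factor_mk'_eq_factor_mk'_iff le_sup_left le_sup_right).1 (hx i j)) Finset.univ
  exact ⟨r, funext fun i => ringCon_mk'_eq_iff_sub_mem.2 (hr i (Finset.mem_univ i))⟩

end Quotients

/-- Let `R` be a ring, `N > 0`, and `I : Fin N → TwoSidedIdeal R` a family
of two-sided ideals with (1) `⋂ᵢ I i = 0` and (2) the sublattice of ideals generated by
the `I i` under sums and intersections distributive.  Then the canonical ring
homomorphism `χ : R → Π i, R/(I i)` is injective and its range is exactly the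
multipullback `{(xᵢ)ᵢ | πᶦⱼ (xᵢ) = πʲᵢ (xⱼ) for all i, j}`, where
`πᶦⱼ : R/(I i) → R/(I i + I j)` are the canonical factor maps; in particular `χ` is a
ring isomorphism onto this subring. -/
theorem stmt10 {R : Type*} [Ring R] (N : ℕ) (hN : 0 < N) (I : Fin N → TwoSidedIdeal R)
    (h1 : ∀ r : R, (∀ i, r ∈ I i) → r = 0)
    (h2 : ∀ J K L : TwoSidedIdeal R, J ∈ latticeGen I → K ∈ latticeGen I →
      L ∈ latticeGen I → J ⊓ (K ⊔ L) = (J ⊓ K) ⊔ (J ⊓ L)) :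
    Function.Injective (Pi.ringHom fun i : Fin N => (I i).ringCon.mk') ∧
    Set.range (Pi.ringHom fun i : Fin N => (I i).ringCon.mk') =
      {x : ∀ i : Fin N, (I i).ringCon.Quotient | ∀ i j : Fin N,
        TwoSidedIdeal.factor (I i) (I i ⊔ I j) le_sup_left (x i) =
        TwoSidedIdeal.factor (I j) (I i ⊔ I j) le_sup_right (x j)} := by
  have inf_sup_le (s : Finset (Fin N)) (j : Fin N) :
      (s.inf fun i => I i ⊔ I j) ≤ s.inf I ⊔ I j :=
    (finset_inf_sup_distrib_right_of_isSublattice (isSublattice_latticeGen I)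
      (fun J hJ K hK L hL => h2 J K L hJ hK hL) s (mem_latticeGen I) (mem_latticeGen I j)).ge
  exact ⟨ringHom_pi_mk'_injective h1, range_ringHom_pi_mk'_eq_multipullback inf_sup_le⟩
end

section
/- Define δ₁ : ℝ × ℝ → ℂ by δ₁(k,t) := exp(iπ(kt/4 + k/2 + 3/2)) and δ₂ : ℝ × ℝ → ℂ by δ₂(t,k) := exp(iπ(−kt/4 − k/2 + 1)). There exist continuous functions φ₁, φ₂ : S¹ → ℝ on the unit circle S¹ = {z ∈ ℂ : |z| = 1} such that: (a) φ₁(z), φ₂(z) ∈ [−1,1] for all z ∈ S¹; (b) φ₁(−z) = −φ₁(z) and φ₂(−z) = −φ₂(z) for all z ∈ S¹; and (c) for all k ∈ {1,−1} and t ∈ [−1,1]: φ₁(δ₁(k,t)) = k, φ₂(δ₁(k,t)) = t, φ₁(δ₂(t,k)) = t, and φ₂(δ₂(t,k)) = k. -/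
/-- `δ₁(k,t) = exp(iπ(kt/4 + k/2 + 3/2))`. -/
noncomputable def delta1 (k t : ℝ) : ℂ :=
  Complex.exp (Complex.I * (Real.pi : ℂ) *
    ((k : ℂ) * (t : ℂ) / 4 + (k : ℂ) / 2 + 3 / 2))

/-- `δ₂(t,k) = exp(iπ(−kt/4 − k/2 + 1))`. -/
noncomputable def delta2 (t k : ℝ) : ℂ :=
  Complex.exp (Complex.I * (Real.pi : ℂ) *
    (-((k : ℂ) * (t : ℂ)) / 4 - (k : ℂ) / 2 + 1))

/-!
For `k = ±1`, `δ₁(k,t)` has real part `k * cos (π * t / 4)` and imaginary part `sin (π * t / 4)`,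
and `δ₂(t,k)` is the mirror image of `δ₁(k,t)` in the diagonal `re = im`. Hence it is enough to find
one continuous odd function `c : ℝ → [-1, 1]` with `c (sin (π * t / 4)) = t` and
`c (cos (π * t / 4)) = 1` for `|t| ≤ 1`, and to take `φ₁ = c ∘ re` and `φ₂ = c ∘ im`. The function
`(4 / π) * arcsin` sends `sin (π * t / 4)` to `t` and `cos (π * t / 4)` to `2 - |t| ≥ 1`, so its
truncation to `[-1, 1]` works.
-/

open Complex ComplexConjugate Set

theorem coe_projIcc_neg {G : Type*} [AddCommGroup G] [LinearOrder G] [IsOrderedAddMonoid G]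
    {a : G} (h : -a ≤ a) (x : G) :
    (projIcc (-a) a h (-x) : G) = -projIcc (-a) a h x := by
  rw [coe_projIcc, coe_projIcc, ← min_neg_neg, neg_neg, ← max_neg_neg, min_max_distrib_left,
    min_eq_right h]

theorem arcsin_cos_eq_pi_div_two_sub_abs {x : ℝ} (hx : |x| ≤ Real.pi) :
    Real.arcsin (Real.cos x) = Real.pi / 2 - |x| := by
  rw [Real.arcsin_eq_pi_div_two_sub_arccos, ← Real.cos_abs, Real.arccos_cos (abs_nonneg x) hx]

/-- The function `(4 / π) * arcsin` truncated to `[-1, 1]`. It recovers the parameter `t` of a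
quarter-arc from the coordinate `sin (π * t / 4)` and is constantly `±1` on the coordinate
`± cos (π * t / 4)`. -/
noncomputable def truncatedArcsin (x : ℝ) : ℝ :=
  projIcc (-1) 1 (neg_le_self zero_le_one) (4 / Real.pi * Real.arcsin x)

theorem continuous_truncatedArcsin : Continuous truncatedArcsin :=
  continuous_subtype_val.comp
    (continuous_projIcc.comp (continuous_const.mul Real.continuous_arcsin))

theorem truncatedArcsin_mem_Icc (x : ℝ) : truncatedArcsin x ∈ Icc (-1 : ℝ) 1 :=
  Subtype.property _

theorem truncatedArcsin_neg (x : ℝ) : truncatedArcsin (-x) = -truncatedArcsin x := by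
  rw [truncatedArcsin, Real.arcsin_neg, mul_neg, coe_projIcc_neg, truncatedArcsin]

theorem truncatedArcsin_sin {t : ℝ} (ht : t ∈ Icc (-1 : ℝ) 1) :
    truncatedArcsin (Real.sin (Real.pi * t / 4)) = t := by
  have arcsin_sin : Real.arcsin (Real.sin (Real.pi * t / 4)) = Real.pi * t / 4 :=
    Real.arcsin_sin (by nlinarith [Real.pi_pos, ht.1]) (by nlinarith [Real.pi_pos, ht.2])
  have rescale : 4 / Real.pi * (Real.pi * t / 4) = t := by field_simp
  rw [truncatedArcsin, arcsin_sin, rescale, projIcc_of_mem _ ht]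

theorem truncatedArcsin_cos {t : ℝ} (ht : t ∈ Icc (-1 : ℝ) 1) :
    truncatedArcsin (Real.cos (Real.pi * t / 4)) = 1 := by
  have abs_t : |t| ≤ 1 := abs_le.2 ht
  have abs_angle : |Real.pi * t / 4| = Real.pi * |t| / 4 := by
    rw [abs_div, abs_mul, abs_of_pos Real.pi_pos, abs_of_pos (zero_lt_four' ℝ)]
  have angle_le : |Real.pi * t / 4| ≤ Real.pi := by
    rw [abs_angle]
    nlinarith [Real.pi_pos]
  have rescale : 4 / Real.pi * (Real.pi / 2 - Real.pi * |t| / 4) = 2 - |t| := by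
    field_simp
    ring
  rw [truncatedArcsin, arcsin_cos_eq_pi_div_two_sub_abs angle_le, abs_angle, rescale,
    projIcc_of_right_le _ (by linarith)]

theorem truncatedArcsin_sign_mul_cos {k t : ℝ} (hk : k = 1 ∨ k = -1) (ht : t ∈ Icc (-1 : ℝ) 1) :
    truncatedArcsin (k * Real.cos (Real.pi * t / 4)) = k := by
  rcases hk with rfl | rfl
  · rw [one_mul, truncatedArcsin_cos ht]
  · rw [neg_one_mul, truncatedArcsin_neg, truncatedArcsin_cos ht]

theorem delta1_eq_exp_ofReal_mul_I (k t : ℝ) :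
    delta1 k t = exp ((Real.pi * (k * t / 4 + k / 2 + 3 / 2) : ℝ) * I) := by
  rw [delta1]
  push_cast
  ring_nf

theorem delta1_re {k : ℝ} (hk : k = 1 ∨ k = -1) (t : ℝ) :
    (delta1 k t).re = k * Real.cos (Real.pi * t / 4) := by
  rw [delta1_eq_exp_ofReal_mul_I, exp_ofReal_mul_I_re]
  rcases hk with rfl | rfl
  · rw [one_mul, one_mul, ← Real.cos_add_two_pi (Real.pi * t / 4)]
    ring_nf
  · rw [neg_one_mul (Real.cos _), ← Real.cos_pi_sub]
    ring_nf

theorem delta1_im {k : ℝ} (hk : k = 1 ∨ k = -1) (t : ℝ) :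
    (delta1 k t).im = Real.sin (Real.pi * t / 4) := by
  rw [delta1_eq_exp_ofReal_mul_I, exp_ofReal_mul_I_im]
  rcases hk with rfl | rfl
  · rw [← Real.sin_add_two_pi (Real.pi * t / 4)]
    ring_nf
  · rw [← Real.sin_pi_sub (Real.pi * t / 4)]
    ring_nf

theorem delta2_eq_I_mul_conj_delta1 (t k : ℝ) : delta2 t k = I * conj (delta1 k t) := by
  have conj_delta1 : conj (delta1 k t) =
      exp (-((Real.pi * (k * t / 4 + k / 2 + 3 / 2) : ℝ) * I)) := by
    rw [delta1_eq_exp_ofReal_mul_I, ← exp_conj, map_mul, conj_ofReal, conj_I, mul_neg]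
  calc delta2 t k
      = exp (Real.pi / 2 * I + -((Real.pi * (k * t / 4 + k / 2 + 3 / 2) : ℝ) * I)) := by
        rw [delta2, exp_eq_exp_iff_exists_int]
        refine ⟨1, ?_⟩
        push_cast
        ring
    _ = I * conj (delta1 k t) := by rw [exp_add, exp_pi_div_two_mul_I, conj_delta1]

theorem delta2_re (t k : ℝ) : (delta2 t k).re = (delta1 k t).im := by
  rw [delta2_eq_I_mul_conj_delta1, I_mul_re, conj_im, neg_neg]

theorem delta2_im (t k : ℝ) : (delta2 t k).im = (delta1 k t).re := by
  rw [delta2_eq_I_mul_conj_delta1, I_mul_im, conj_re]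

/-- There exist continuous functions `φ₁, φ₂ : S¹ → ℝ` on the unit circle
`S¹ = {z ∈ ℂ : |z| = 1}` such that: (a) they take values in `[-1,1]`;
(b) `φᵢ(-z) = -φᵢ(z)`; and (c) for all `k ∈ {1,-1}` and `t ∈ [-1,1]`:
`φ₁(δ₁(k,t)) = k`, `φ₂(δ₁(k,t)) = t`, `φ₁(δ₂(t,k)) = t` and `φ₂(δ₂(t,k)) = k`. -/
theorem stmt12 :
    ∃ φ₁ φ₂ : ↥(Metric.sphere (0 : ℂ) 1) → ℝ,
      Continuous φ₁ ∧ Continuous φ₂ ∧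
      (∀ z : ↥(Metric.sphere (0 : ℂ) 1),
        φ₁ z ∈ Set.Icc (-1 : ℝ) 1 ∧ φ₂ z ∈ Set.Icc (-1 : ℝ) 1) ∧
      (∀ z w : ↥(Metric.sphere (0 : ℂ) 1), (w : ℂ) = -(z : ℂ) →
        φ₁ w = -φ₁ z ∧ φ₂ w = -φ₂ z) ∧
      (∀ k t : ℝ, (k = 1 ∨ k = -1) → t ∈ Set.Icc (-1 : ℝ) 1 →
        ∀ z : ↥(Metric.sphere (0 : ℂ) 1),
          ((z : ℂ) = delta1 k t → φ₁ z = k ∧ φ₂ z = t) ∧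
          ((z : ℂ) = delta2 t k → φ₁ z = t ∧ φ₂ z = k)) := by
  refine ⟨fun z => truncatedArcsin (z : ℂ).re, fun z => truncatedArcsin (z : ℂ).im,
    continuous_truncatedArcsin.comp (continuous_re.comp continuous_subtype_val),
    continuous_truncatedArcsin.comp (continuous_im.comp continuous_subtype_val),
    fun z => ⟨truncatedArcsin_mem_Icc _, truncatedArcsin_mem_Icc _⟩, ?odd, ?splitting⟩
  case odd =>
    intro z w hw
    simp only [hw, neg_re, neg_im, truncatedArcsin_neg, and_self]
  case splitting =>
    intro k t hk ht z
    have at_re : truncatedArcsin (delta1 k t).re = k := by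
      rw [delta1_re hk, truncatedArcsin_sign_mul_cos hk ht]
    have at_im : truncatedArcsin (delta1 k t).im = t := by
      rw [delta1_im hk, truncatedArcsin_sin ht]
    constructor <;> intro hz
    · simp only [hz, at_re, at_im, and_self]
    · simp only [hz, delta2_re, delta2_im, at_re, at_im, and_self]
end
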